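/- arXiv:1807.06791 — 2 statements merged into one kernel-verified Lean document; each statement's English description precedes it below -/
import Mathlib

section
/- Every modular form of weight 8 for SL₂(ℤ) whose constant Fourier coefficient (value at the cusp at infinity) is 0 is identically zero; in particular, every cusp form of weight 8 for SL₂(ℤ) vanishes identically, and the space of modular forms of weight 8 for SL₂(ℤ) has dimension 1. -/
/-!
Dividing a level-one cusp form of weight `k` by the discriminant `Δ`, which has no zeros on `ℍ` and
a simple zero at the cusp, gives a modular form of weight `k - 12`. There are none but zero when
`k < 12`, so in those weights a modular form is determined by its constant Fourier coefficient.
For even `4 ≤ k < 12` it is that coefficient times the Eisenstein series `E_k`, whose constant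
coefficient is `1`.
-/

open Complex Real Set
open scoped MatrixGroups

noncomputable section

/-- The upper half-plane, as a subset of `ℂ`. -/
def UHP : Set ℂ := {τ | 0 < τ.im}

/-- `h` is a modular form of weight 8 for `SL₂(ℤ)` with Fourier coefficients `c`:
it is holomorphic on the upper half-plane, transforms with weight 8 under `SL₂(ℤ)`,
is bounded as `Im τ → ∞`, and has the Fourier expansion `h τ = ∑_{n ≥ 0} c n e^{2πinτ}`. -/
def IsModularFormWt8 (h : ℂ → ℂ) (c : ℕ → ℂ) : Prop :=
  DifferentiableOn ℂ h UHP ∧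
  (∀ γ : SL(2, ℤ), ∀ τ ∈ UHP,
      h ((((γ.1 0 0 : ℤ) : ℂ) * τ + ((γ.1 0 1 : ℤ) : ℂ)) /
          (((γ.1 1 0 : ℤ) : ℂ) * τ + ((γ.1 1 1 : ℤ) : ℂ)))
        = (((γ.1 1 0 : ℤ) : ℂ) * τ + ((γ.1 1 1 : ℤ) : ℂ)) ^ 8 * h τ) ∧
  (∃ C A : ℝ, ∀ τ ∈ UHP, A ≤ τ.im → ‖h τ‖ ≤ C) ∧
  (∀ τ ∈ UHP, HasSum (fun n : ℕ => c n * Complex.exp (2 * π * I * n * τ)) (h τ))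

open UpperHalfPlane ModularForm

local notation "𝕢" => Function.Periodic.qParam

section LowWeight

variable {k : ℤ}

lemma eq_zero_of_isCuspForm_of_weight_lt_twelve (hk : k < 12) {f : ModularForm 𝒮ℒ k}
    (hf : IsCuspForm f) : f = 0 := by
  obtain ⟨g, rfl⟩ := hf
  have hg : g = 0 := rank_zero_iff_forall_zero.mp (CuspForm.rank_eq_zero_of_weight_lt_twelve hk) g
  rw [hg, map_zero]

lemma eq_coeff_zero_smul_of_weight_lt_twelve (hk : k < 12) (f : ModularForm 𝒮ℒ k)
    {g : ModularForm 𝒮ℒ k} (hg : (qExpansion 1 g).coeff 0 = 1) :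
    f = (qExpansion 1 f).coeff 0 • g :=
  sub_eq_zero.mp <| eq_zero_of_isCuspForm_of_weight_lt_twelve hk (sub_smul_isCuspForm f g hg)

end LowWeight

/-- A modular form of weight `k` for `SL₂(ℤ)` with Fourier coefficients `c`: the notion
`IsModularFormWt8` with the weight as a parameter, written with Mathlib's automorphy factor `denom`
and `q`-parameter `𝕢 1 τ = e^{2πiτ}` so that it can be compared with `ModularForm 𝒮ℒ k`. As there,
`h` is a function on all of `ℂ`, whose values off the upper half-plane are irrelevant. -/
structure IsLevelOneModularForm (k : ℤ) (h : ℂ → ℂ) (c : ℕ → ℂ) : Prop where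
  differentiableOn : DifferentiableOn ℂ h UHP
  map_smul (γ : SL(2, ℤ)) (τ : ℍ) : h ↑(γ • τ) = denom γ τ ^ k * h τ
  isBoundedAtImInfty : IsBoundedAtImInfty fun τ : ℍ ↦ h τ
  hasSum (τ : ℍ) : HasSum (fun n ↦ c n • 𝕢 1 τ ^ n) (h τ)

lemma isLevelOneModularForm_iff {k : ℤ} {h : ℂ → ℂ} {c : ℕ → ℂ} :
    IsLevelOneModularForm k h c ↔
      DifferentiableOn ℂ h UHP ∧
      (∀ (γ : SL(2, ℤ)) (τ : ℍ), h ↑(γ • τ) = denom γ τ ^ k * h τ) ∧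
      IsBoundedAtImInfty (fun τ : ℍ ↦ h τ) ∧
      ∀ τ : ℍ, HasSum (fun n ↦ c n • 𝕢 1 τ ^ n) (h τ) :=
  ⟨fun ⟨hd, hm, hb, hs⟩ ↦ ⟨hd, hm, hb, hs⟩, fun ⟨hd, hm, hb, hs⟩ ↦ ⟨hd, hm, hb, hs⟩⟩

namespace IsLevelOneModularForm

variable {k : ℤ} {h h₀ : ℂ → ℂ} {c c₀ : ℕ → ℂ}

lemma slash_eq (hh : IsLevelOneModularForm k h c) (γ : SL(2, ℤ)) :
    (fun τ : ℍ ↦ h τ) ∣[k] γ = fun τ : ℍ ↦ h τ := by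
  ext τ
  rw [slash_action_eq'_iff]
  exact hh.map_smul γ τ

/-- The restriction of `h` to `ℍ` as a bundled modular form for the image `𝒮ℒ` of `SL(2, ℤ)` in
`GL (Fin 2) ℝ`. -/
def toModularForm (hh : IsLevelOneModularForm k h c) : ModularForm 𝒮ℒ k where
  toFun τ := h τ
  slash_action_eq' := fun _ ⟨γ, hγ⟩ ↦ hγ ▸ hh.slash_eq γ
  holo' := mdifferentiable_iff.mpr <| hh.differentiableOn.congr fun z hz ↦
    congrArg (fun τ : ℍ ↦ h τ) (ofComplex_apply_of_im_pos hz)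
  bdd_at_cusps' hcusp := by
    rw [OnePoint.isBoundedAt_iff_forall_SL2Z hcusp]
    intro γ _
    exact (hh.slash_eq γ).symm ▸ hh.isBoundedAtImInfty

lemma qExpansion_toModularForm_coeff (hh : IsLevelOneModularForm k h c) (n : ℕ) :
    (qExpansion 1 hh.toModularForm).coeff n = c n :=
  (ModularFormClass.qExpansion_coeff_unique one_pos one_mem_strictPeriods_SL hh.hasSum n).symm

lemma eqOn_zero_of_weight_lt_twelve (hh : IsLevelOneModularForm k h c) (hk : k < 12)
    (hc : c 0 = 0) : Set.EqOn h 0 UHP := by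
  have hcusp : IsCuspForm hh.toModularForm := by
    rw [isCuspForm_iff_coeffZero_eq_zero, qExpansion_toModularForm_coeff, hc]
  have hzero : hh.toModularForm = 0 := eq_zero_of_isCuspForm_of_weight_lt_twelve hk hcusp
  exact fun τ hτ ↦ DFunLike.congr_fun hzero (⟨τ, hτ⟩ : ℍ)

lemma eqOn_coeff_zero_mul_of_weight_lt_twelve (hh : IsLevelOneModularForm k h c)
    (hh₀ : IsLevelOneModularForm k h₀ c₀) (hk : k < 12) (hc₀ : c₀ 0 = 1) :
    Set.EqOn h (fun τ ↦ c 0 * h₀ τ) UHP := by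
  have hsmul : hh.toModularForm = c 0 • hh₀.toModularForm := by
    rw [← hh.qExpansion_toModularForm_coeff 0]
    exact eq_coeff_zero_smul_of_weight_lt_twelve hk _
      ((hh₀.qExpansion_toModularForm_coeff 0).trans hc₀)
  exact fun τ hτ ↦ DFunLike.congr_fun hsmul (⟨τ, hτ⟩ : ℍ)

end IsLevelOneModularForm

lemma isLevelOneModularForm_comp_ofComplex {k : ℤ} (f : ModularForm 𝒮ℒ k) :
    IsLevelOneModularForm k (f ∘ ofComplex) fun n ↦ (qExpansion 1 f).coeff n where
  differentiableOn := mdifferentiable_iff.mp f.holo'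
  map_smul γ τ := by
    simpa only [Function.comp_apply, ofComplex_apply] using!
      SlashInvariantForm.slash_action_eqn'' f (Γ := 𝒮ℒ) ⟨γ, rfl⟩ τ
  isBoundedAtImInfty := by
    have : Fact (IsCusp OnePoint.infty 𝒮ℒ) :=
      ⟨Subgroup.isCusp_of_mem_strictPeriods one_pos one_mem_strictPeriods_SL⟩
    simpa only [Function.comp_apply, ofComplex_apply] using ModularFormClass.bdd_at_infty f
  hasSum τ := by
    simpa only [Function.comp_apply, ofComplex_apply] using!
      ModularForm.hasSum_qExpansion f one_pos one_mem_strictPeriods_SL τ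

lemma forall_mem_UHP_iff {p : ℂ → Prop} : (∀ τ ∈ UHP, p τ) ↔ ∀ τ : ℍ, p τ :=
  ⟨fun hp τ ↦ hp τ τ.im_pos, fun hp τ hτ ↦ hp ⟨τ, hτ⟩⟩

lemma denom_specialLinearGroup_int (γ : SL(2, ℤ)) (τ : ℍ) :
    denom γ τ = ((γ.1 1 0 : ℤ) : ℂ) * τ + ((γ.1 1 1 : ℤ) : ℂ) := by
  simp [denom]

lemma coe_specialLinearGroup_int_smul (γ : SL(2, ℤ)) (τ : ℍ) :
    ((γ • τ : ℍ) : ℂ) =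
      (((γ.1 0 0 : ℤ) : ℂ) * τ + ((γ.1 0 1 : ℤ) : ℂ)) /
        (((γ.1 1 0 : ℤ) : ℂ) * τ + ((γ.1 1 1 : ℤ) : ℂ)) := by
  rw [coe_specialLinearGroup_apply]
  simp

lemma qParam_one_pow (τ : ℂ) (n : ℕ) : 𝕢 1 τ ^ n = Complex.exp (2 * π * Complex.I * n * τ) := by
  rw [Function.Periodic.qParam, ← Complex.exp_nat_mul, Complex.ofReal_one]
  ring_nf

lemma isModularFormWt8_iff {h : ℂ → ℂ} {c : ℕ → ℂ} :
    IsModularFormWt8 h c ↔ IsLevelOneModularForm 8 h c := by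
  simp only [IsModularFormWt8, isLevelOneModularForm_iff, forall_mem_UHP_iff,
    isBoundedAtImInfty_iff, coe_specialLinearGroup_int_smul, denom_specialLinearGroup_int,
    zpow_ofNat, smul_eq_mul, qParam_one_pow, coe_im]

theorem weight_eight_modular_forms_dim_one_general {k : ℕ} (hk : 3 ≤ k) (hk12 : k < 12)
    (hk2 : Even k) :
    (∀ h : ℂ → ℂ, ∀ c : ℕ → ℂ, IsLevelOneModularForm k h c → c 0 = 0 → Set.EqOn h 0 UHP) ∧
    (∃ h₀ : ℂ → ℂ, ∃ c₀ : ℕ → ℂ, IsLevelOneModularForm k h₀ c₀ ∧ ¬ Set.EqOn h₀ 0 UHP ∧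
      ∀ h : ℂ → ℂ, ∀ c : ℕ → ℂ, IsLevelOneModularForm k h c →
        ∃ l : ℂ, Set.EqOn h (fun τ => l * h₀ τ) UHP) := by
  have hk12' : (k : ℤ) < 12 := mod_cast hk12
  have hE := isLevelOneModularForm_comp_ofComplex (ModularForm.E hk)
  refine ⟨fun h c hh hc ↦ hh.eqOn_zero_of_weight_lt_twelve hk12' hc, _, _, hE, fun hzero ↦ ?_,
    fun h c hh ↦ ⟨c 0, hh.eqOn_coeff_zero_mul_of_weight_lt_twelve hE hk12'
      (EisensteinSeries.E_qExpansion_coeff_zero hk hk2)⟩⟩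
  refine EisensteinSeries.E_ne_zero hk hk2 (DFunLike.ext _ _ fun τ ↦ ?_)
  simpa only [Function.comp_apply, ofComplex_apply] using! hzero τ.im_pos

/-- Every modular form of weight 8 for `SL₂(ℤ)` with vanishing constant Fourier coefficient
is identically zero on `ℍ`; in particular every cusp form of weight 8 vanishes identically,
and the space of modular forms of weight 8 for `SL₂(ℤ)` is one-dimensional: it contains a
nonzero form `h₀`, and every form is a scalar multiple of `h₀` on `ℍ`. -/
theorem weight_eight_modular_forms_dim_one :
    (∀ h : ℂ → ℂ, ∀ c : ℕ → ℂ, IsModularFormWt8 h c → c 0 = 0 → Set.EqOn h 0 UHP) ∧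
    (∃ h₀ : ℂ → ℂ, ∃ c₀ : ℕ → ℂ, IsModularFormWt8 h₀ c₀ ∧ ¬ Set.EqOn h₀ 0 UHP ∧
      ∀ h : ℂ → ℂ, ∀ c : ℕ → ℂ, IsModularFormWt8 h c →
        ∃ l : ℂ, Set.EqOn h (fun τ => l * h₀ τ) UHP) := by
  simp only [isModularFormWt8_iff]
  exact weight_eight_modular_forms_dim_one_general (k := 8) (by norm_num) (by norm_num) ⟨4, rfl⟩

end
end

section
/- Let S be a positive definite even unimodular 16×16 matrix. Then θ_S(τ) = E₈(τ) for all τ in the upper half-plane ℍ. -/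
open Complex Real Set
open scoped MatrixGroups Matrix

noncomputable section

/-- The subgroup `Γ∞ = {(a b; 0 d) ∈ SL₂(ℤ)}` of upper triangular matrices. -/
def GammaInf : Subgroup SL(2, ℤ) where
  carrier := {γ | γ.1 1 0 = 0}
  one_mem' := by simp
  mul_mem' := by
    intro x y hx hy
    have h := (Matrix.two_mul_expl x.1 y.1).2.2.1
    simp only [Set.mem_setOf_eq] at *
    simp [Matrix.SpecialLinearGroup.coe_mul, h, hx, hy]
  inv_mem' := by
    intro x hx
    simp only [Set.mem_setOf_eq] at *
    rw [Matrix.SpecialLinearGroup.SL2_inv_expl x]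
    simpa using hx

/-- The square `j(γ,τ)² = (cτ+d)²` of the automorphy factor, as a well-defined function on
the set `Γ∞\SL₂(ℤ)` of right cosets `Γ∞γ` (it is insensitive to the sign ambiguity
`(c,d) ↦ (-c,-d)` coming from left multiplication by `Γ∞`). -/
def jsq (τ : ℂ) : Quotient (QuotientGroup.rightRel GammaInf) → ℂ :=
  Quotient.lift
    (fun γ : SL(2, ℤ) => (((γ.1 1 0 : ℤ) : ℂ) * τ + ((γ.1 1 1 : ℤ) : ℂ)) ^ 2)
    (by
      intro x y hxy
      have h : y * x⁻¹ ∈ GammaInf := QuotientGroup.rightRel_apply.mp hxy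
      set η : SL(2, ℤ) := y * x⁻¹ with hη
      have hyx : y = η * x := by rw [hη]; group
      have hη10 : η.1 1 0 = 0 := h
      have h10 : y.1 1 0 = η.1 1 1 * x.1 1 0 := by
        have h2 := (Matrix.two_mul_expl η.1 x.1).2.2.1
        rw [hyx]
        simp only [Matrix.SpecialLinearGroup.coe_mul]
        rw [h2, hη10]; ring
      have h11 : y.1 1 1 = η.1 1 1 * x.1 1 1 := by
        have h2 := (Matrix.two_mul_expl η.1 x.1).2.2.2
        rw [hyx]
        simp only [Matrix.SpecialLinearGroup.coe_mul]
        rw [h2, hη10]; ring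
      have hdet : η.1 0 0 * η.1 1 1 = 1 := by
        have hd := η.2
        rw [Matrix.det_fin_two] at hd
        rw [hη10] at hd; linarith
      have hsq : (((η.1 1 1 : ℤ) : ℂ)) ^ 2 = 1 := by
        have hdet' : η.1 1 1 * η.1 0 0 = 1 := by linarith
        rcases Int.eq_one_or_neg_one_of_mul_eq_one hdet' with h1 | h1 <;>
          rw [h1] <;> norm_num
      have hkey : ((y.1 1 0 : ℤ) : ℂ) * τ + ((y.1 1 1 : ℤ) : ℂ)
          = ((η.1 1 1 : ℤ) : ℂ) * (((x.1 1 0 : ℤ) : ℂ) * τ + ((x.1 1 1 : ℤ) : ℂ)) := by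
        rw [h10, h11]; push_cast; ring
      show (((x.1 1 0 : ℤ) : ℂ) * τ + ((x.1 1 1 : ℤ) : ℂ)) ^ 2
          = (((y.1 1 0 : ℤ) : ℂ) * τ + ((y.1 1 1 : ℤ) : ℂ)) ^ 2
      rw [hkey, mul_pow, hsq, one_mul])

/-- The weight-`w` Eisenstein series `E_w(τ) = ∑_{γ ∈ Γ∞\SL₂(ℤ)} j(γ,τ)^{-w}`
(for even `w`, written via `j(γ,τ)^{-w} = (j(γ,τ)²)^{-w/2}`). -/
def Ewt (w : ℕ) (τ : ℂ) : ℂ :=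
  ∑' q : Quotient (QuotientGroup.rightRel GammaInf), jsq τ q ^ (-((w : ℤ) / 2))

/-- The weight-8 Eisenstein series `E₈`. -/
def E8 : ℂ → ℂ := Ewt 8


/-- `S ∈ M_m(ℤ)` is positive definite even unimodular: symmetric, positive definite (as a
real matrix), of determinant one, with all diagonal entries even. -/
def IsPosDefEvenUnimodular {m : ℕ} (S : Matrix (Fin m) (Fin m) ℤ) : Prop :=
  S.IsSymm ∧ (S.map ((↑) : ℤ → ℝ)).PosDef ∧ S.det = 1 ∧ ∀ i, Even (S i i)

/-- The theta series `θ_S(τ) = ∑_{x ∈ ℤ^m} e^{πiτ xᵀSx}` of an integral matrix `S`. -/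
def thetaSeries {m : ℕ} (S : Matrix (Fin m) (Fin m) ℤ) (τ : ℂ) : ℂ :=
  ∑' x : Fin m → ℤ, Complex.exp (π * I * τ * ((x ⬝ᵥ S.mulVec x : ℤ) : ℂ))

/-!
The theta series of an even unimodular matrix of size `m` divisible by `8` is a modular form of
weight `m / 2` for `SL(2, ℤ)`. Evenness gives invariance under `τ ↦ τ + 1`. For `τ ↦ -1 / τ`,
Poisson summation of the Gaussian `e^{πiτ vᵀSv}` turns the theta series of `S` at `τ` into that of
`S⁻¹` at `-1 / τ`, and the substitution `x ↦ Sx` of `ℤ^m`, bijective since `det S = 1`, turns `S⁻¹`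
back into `S`; the remaining factor `i^{m/2}` is `1`. Below weight `12` there is no nonzero cusp
form, so the theta series and the Eisenstein series, both with constant term `1`, coincide.
-/

section Poisson

open MeasureTheory UnitAddTorus FourierTransform
open scoped RealInnerProductSpace

variable {ι : Type*}

/-- The integer vector `x ∈ ℤ^ι`, as a point of Euclidean space `ℝ^ι`. -/
def intVec (x : ι → ℤ) : EuclideanSpace ℝ ι := WithLp.toLp 2 fun i => (x i : ℝ)

lemma intVec_apply (x : ι → ℤ) (i : ι) : intVec x i = x i := rfl

lemma intVec_zero : intVec (0 : ι → ℤ) = 0 := by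
  ext i
  simp [intVec_apply]

lemma intVec_add (x y : ι → ℤ) : intVec (x + y) = intVec x + intVec y := by
  ext i
  simp [intVec_apply]

lemma intVec_neg (x : ι → ℤ) : intVec (-x) = -intVec x := by
  ext i
  simp [intVec_apply]

lemma intVec_injective : Function.Injective (intVec (ι := ι)) := fun x y h =>
  funext fun i => Int.cast_injective (congrArg (· i) h : (x i : ℝ) = y i)

/-- The half-open unit cube in `ℝ^ι` with lower corner `x ∈ ℤ^ι`; the cube at the origin is the one
over which `UnitAddTorus.mFourierCoeff_eq_integral` computes Fourier coefficients. -/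
def unitCube (x : ι → ℤ) : Set (ι → ℝ) := {u | ∀ i, u i ∈ Ioc (x i : ℝ) (x i + 1)}

lemma mem_unitCube_iff_ceil {x : ι → ℤ} {u : ι → ℝ} :
    u ∈ unitCube x ↔ ∀ i, ⌈u i⌉ = x i + 1 := by
  simp [unitCube, Int.ceil_eq_iff]

lemma pairwise_disjoint_unitCube : Pairwise (Function.onFun Disjoint (unitCube (ι := ι))) := by
  intro x y hxy
  refine Set.disjoint_left.mpr fun u hx hy => hxy (funext fun i => ?_)
  have hxi := mem_unitCube_iff_ceil.mp hx i
  have hyi := mem_unitCube_iff_ceil.mp hy i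
  lia

lemma iUnion_unitCube : ⋃ x : ι → ℤ, unitCube x = univ :=
  eq_univ_of_forall fun u =>
    mem_iUnion.mpr ⟨fun i => ⌈u i⌉ - 1, mem_unitCube_iff_ceil.mpr fun _ => by ring⟩

lemma measurableSet_unitCube [Countable ι] (x : ι → ℤ) : MeasurableSet (unitCube x) := by
  have hpi : unitCube x = Set.pi univ fun i => Ioc (x i : ℝ) (x i + 1) := by
    ext u
    simp [unitCube]
  rw [hpi]
  exact MeasurableSet.univ_pi fun i => measurableSet_Ioc

lemma exists_continuousMap_unitAddTorus {X : Type*} [TopologicalSpace X]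
    {G : EuclideanSpace ℝ ι → X} (hG : Continuous G)
    (hper : ∀ u (x : ι → ℤ), G (u + intVec x) = G u) :
    ∃ F : C(UnitAddTorus ι, X), ∀ u : EuclideanSpace ℝ ι, F (fun i => u i) = G u := by
  let q : C(ι → ℝ, UnitAddTorus ι) := ⟨Pi.map fun _ t => (t : UnitAddCircle), by fun_prop⟩
  have hq : IsOpenQuotientMap q :=
    IsOpenQuotientMap.piMap fun _ => QuotientAddGroup.isOpenQuotientMap_mk
  let G' : C(ι → ℝ, X) := ⟨fun u => G (WithLp.toLp 2 u), by fun_prop⟩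
  have hfac : Function.FactorsThrough G' q := by
    intro u v huv
    have hdiff (i : ι) : ∃ n : ℤ, n • (1 : ℝ) = u i - v i := by
      rw [← AddCircle.coe_eq_zero_iff, AddCircle.coe_sub, sub_eq_zero]
      exact congrFun huv i
    choose x hx using hdiff
    have huv' : WithLp.toLp 2 u = WithLp.toLp 2 v + intVec x := by
      ext i
      have hxi : (x i : ℝ) = u i - v i := by simpa using hx i
      simp [intVec_apply, hxi]
    simp only [G', ContinuousMap.coe_mk, huv', hper]
  exact ⟨hq.isQuotientMap.lift G' hfac, fun u =>
    DFunLike.congr_fun (hq.isQuotientMap.lift_comp G' hfac) u.ofLp⟩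

variable [Fintype ι]

lemma hasSum_setIntegral_unitCube_add_intVec {E : Type*} [NormedAddCommGroup E] [NormedSpace ℝ E]
    {g : EuclideanSpace ℝ ι → E} (hg : Integrable g) :
    HasSum (fun x : ι → ℤ => ∫ u in unitCube 0, g (WithLp.toLp 2 u + intVec x)) (∫ v, g v) := by
  have hvol := PiLp.volume_preserving_toLp ι
  have hemb := (MeasurableEquiv.toLp 2 (ι → ℝ)).measurableEmbedding
  have h := hasSum_integral_iUnion (f := fun u => g (WithLp.toLp 2 u)) measurableSet_unitCube
    pairwise_disjoint_unitCube ((hvol.integrable_comp_emb hemb).mpr hg).integrableOn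
  rw [iUnion_unitCube, setIntegral_univ, hvol.integral_comp hemb] at h
  refine h.congr_fun fun x => ?_
  rw [← (measurePreserving_add_right volume fun i => (x i : ℝ)).setIntegral_preimage_emb
    (MeasurableEquiv.addRight _).measurableEmbedding _ (unitCube x)]
  congr 2
  ext u
  simp [unitCube, add_comm (_ : ℝ) 1]

lemma intVec_mem_span_basisFun (x : ι → ℤ) :
    intVec x ∈ Submodule.span ℤ (range (EuclideanSpace.basisFun ι ℝ).toBasis) := by
  classical
  have hx : intVec x = ∑ i, x i • (EuclideanSpace.basisFun ι ℝ).toBasis i := by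
    ext j
    simp [intVec_apply, Pi.single_apply]
  rw [hx]
  exact Submodule.sum_mem _ fun i _ =>
    Submodule.smul_mem _ _ (Submodule.subset_span (mem_range_self i))

lemma summable_norm_intVec_rpow_neg {r : ℝ} (hr : Fintype.card ι < r) :
    Summable fun x : ι → ℤ => ‖intVec x‖ ^ (-r) := by
  let L := Submodule.span ℤ (range (EuclideanSpace.basisFun ι ℝ).toBasis)
  have hrank : Module.finrank ℤ L = Fintype.card ι := by
    rw [ZLattice.rank ℝ L, finrank_euclideanSpace]
  have hL : Summable fun v : L => ‖v‖ ^ (-r) :=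
    ZLattice.summable_norm_rpow L (-r) (by rw [hrank]; linarith)
  let e (x : ι → ℤ) : L := ⟨intVec x, intVec_mem_span_basisFun x⟩
  have he : Function.Injective e := fun x y h => intVec_injective (congrArg Subtype.val h)
  simpa [Function.comp_def, e] using hL.comp_injective he

lemma summable_one_add_norm_intVec_rpow_neg {r : ℝ} (hr : Fintype.card ι < r) :
    Summable fun x : ι → ℤ => (1 + ‖intVec x‖) ^ (-r) := by
  have hr0 : 0 ≤ r := (Nat.cast_nonneg _).trans hr.le
  refine (summable_norm_intVec_rpow_neg hr).of_norm_bounded_eventually ?_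
  filter_upwards [(Set.finite_singleton (0 : ι → ℤ)).compl_mem_cofinite] with x hx
  have hpos : 0 < ‖intVec x‖ := norm_pos_iff.mpr (intVec_zero (ι := ι) ▸ intVec_injective.ne hx)
  rw [Real.norm_of_nonneg (by positivity)]
  exact Real.rpow_le_rpow_of_nonpos hpos (by linarith) (neg_nonpos.mpr hr0)

lemma one_add_norm_add_rpow_neg_le {E : Type*} [SeminormedAddCommGroup E] {r : ℝ} (hr : 0 ≤ r)
    (u v : E) : (1 + ‖u + v‖) ^ (-r) ≤ (1 + ‖u‖) ^ r * (1 + ‖v‖) ^ (-r) := by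
  have htri : 1 + ‖v‖ ≤ (1 + ‖u‖) * (1 + ‖u + v‖) := by
    have hv : ‖v‖ ≤ ‖u‖ + ‖u + v‖ := by simpa [add_comm] using norm_sub_le (u + v) u
    nlinarith [norm_nonneg u, norm_nonneg (u + v)]
  rw [Real.rpow_neg (by positivity), Real.rpow_neg (by positivity), ← div_eq_mul_inv,
    inv_le_iff_one_le_mul₀ (by positivity), div_mul_eq_mul_div, one_le_div (by positivity),
    ← Real.mul_rpow (by positivity) (by positivity)]
  exact Real.rpow_le_rpow (by positivity) htri hr

section Decay

variable {f : EuclideanSpace ℝ ι → ℂ} {C r : ℝ}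

lemma continuous_tsum_add_intVec (hf : Continuous f) (hr : Fintype.card ι < r)
    (hdecay : ∀ v, ‖f v‖ ≤ C * (1 + ‖v‖) ^ (-r)) :
    Continuous fun u => ∑' x : ι → ℤ, f (u + intVec x) := by
  have hr0 : 0 ≤ r := (Nat.cast_nonneg _).trans hr.le
  have hC : 0 ≤ C := by simpa using (norm_nonneg _).trans (hdecay 0)
  refine continuous_iff_continuousAt.mpr fun u₀ => ?_
  let R := ‖u₀‖ + 1
  have hball : ContinuousOn (fun u => ∑' x : ι → ℤ, f (u + intVec x)) (Metric.ball 0 R) := by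
    refine continuousOn_tsum (u := fun x => C * ((1 + R) ^ r * (1 + ‖intVec x‖) ^ (-r)))
      (fun x => (hf.comp (continuous_add_const _)).continuousOn)
      (((summable_one_add_norm_intVec_rpow_neg hr).mul_left _).mul_left C) fun x u hu => ?_
    have huR : ‖u‖ ≤ R := (mem_ball_zero_iff.mp hu).le
    calc ‖f (u + intVec x)‖ ≤ C * ((1 + ‖u‖) ^ r * (1 + ‖intVec x‖) ^ (-r)) :=
          (hdecay _).trans (by gcongr; exact one_add_norm_add_rpow_neg_le hr0 u _)
      _ ≤ C * ((1 + R) ^ r * (1 + ‖intVec x‖) ^ (-r)) := by gcongr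
  exact hball.continuousAt (Metric.isOpen_ball.mem_nhds (by simp [R]))

lemma integrable_of_norm_le_one_add_norm_rpow_neg (hf : Continuous f) (hr : Fintype.card ι < r)
    (hdecay : ∀ v, ‖f v‖ ≤ C * (1 + ‖v‖) ^ (-r)) : Integrable f :=
  ((integrable_one_add_norm (by rwa [finrank_euclideanSpace])).const_mul C).mono'
    hf.aestronglyMeasurable (Filter.Eventually.of_forall hdecay)

end Decay

lemma mFourier_coe (n : ι → ℤ) (u : EuclideanSpace ℝ ι) :
    mFourier n (fun i => (u i : UnitAddCircle)) = 𝐞 ⟪u, intVec n⟫ := by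
  simp [mFourier, Real.fourierChar_apply, PiLp.inner_apply, intVec_apply, ← Complex.exp_sum,
    Finset.mul_sum, mul_assoc, mul_left_comm, mul_comm]

lemma fourierChar_inner_add_intVec (v : EuclideanSpace ℝ ι) (x n : ι → ℤ) :
    𝐞 (-⟪v + intVec x, intVec n⟫) = 𝐞 (-⟪v, intVec n⟫) := by
  have hinner : ⟪intVec x, intVec n⟫ = ((∑ i, x i * n i : ℤ) : ℝ) := by
    simp [PiLp.inner_apply, intVec_apply, mul_comm]
  have hone : 𝐞 (-⟪intVec x, intVec n⟫) = 1 := by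
    rw [hinner, ← Int.cast_neg, ← zsmul_one, AddChar.map_zsmul_eq_zpow, Real.fourierChar_apply']
    simp
  rw [inner_add_left, neg_add, AddChar.map_add_eq_mul, hone, mul_one]

lemma mFourierCoeff_eq_fourier_intVec {f : EuclideanSpace ℝ ι → ℂ} (hf : Integrable f)
    {F : C(UnitAddTorus ι, ℂ)}
    (hF : ∀ u : EuclideanSpace ℝ ι, F (fun i => u i) = ∑' x : ι → ℤ, f (u + intVec x))
    (n : ι → ℤ) : mFourierCoeff F n = 𝓕 f (intVec n) := by
  let g : EuclideanSpace ℝ ι → ℂ := fun v => 𝐞 (-⟪v, intVec n⟫) • f v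
  have hg : Integrable g := (Real.fourierIntegral_convergent_iff _).mpr hf
  have hcube : {u : ι → ℝ | ∀ i, u i ∈ Ioc ((0 : ι → ℝ) i) ((0 : ι → ℝ) i + 1)} = unitCube 0 := by
    simp [unitCube]
  have hintegrable (x : ι → ℤ) : Integrable (fun u => g (WithLp.toLp 2 u + intVec x))
      (volume.restrict (unitCube 0)) :=
    (((PiLp.volume_preserving_toLp ι).integrable_comp_emb
      (MeasurableEquiv.toLp 2 (ι → ℝ)).measurableEmbedding).mpr
        (hg.comp_add_right _)).integrableOn
  rw [Real.fourier_eq, ← (hasSum_setIntegral_unitCube_add_intVec hg).tsum_eq,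
    integral_tsum_of_summable_integral_norm hintegrable
      (hasSum_setIntegral_unitCube_add_intVec hg.norm).summable,
    mFourierCoeff_eq_integral F n 0, hcube]
  refine setIntegral_congr_fun (measurableSet_unitCube 0) fun u _ => ?_
  have hchar : mFourier (-n) (fun i => (u i : UnitAddCircle)) =
      𝐞 (-⟪WithLp.toLp 2 u, intVec n⟫) := by
    rw [← inner_neg_right, ← intVec_neg, ← mFourier_coe]
  simp only [g, fourierChar_inner_add_intVec, Circle.smul_def, smul_eq_mul, tsum_mul_left, hchar,
    ← hF]

/-- **Poisson summation**: both sides are the value at `0` of the periodisation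
`u ↦ ∑' x, f (u + intVec x)`, the right one through its Fourier series. -/
theorem tsum_intVec_eq_tsum_fourier_intVec {f : EuclideanSpace ℝ ι → ℂ} {C r : ℝ}
    (hf : Continuous f) (hr : Fintype.card ι < r) (hdecay : ∀ v, ‖f v‖ ≤ C * (1 + ‖v‖) ^ (-r))
    (hsum : Summable fun n : ι → ℤ => 𝓕 f (intVec n)) :
    ∑' x : ι → ℤ, f (intVec x) = ∑' n : ι → ℤ, 𝓕 f (intVec n) := by
  obtain ⟨F, hF⟩ := exists_continuousMap_unitAddTorus (continuous_tsum_add_intVec hf hr hdecay)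
    fun u y => by
      rw [← (Equiv.addLeft y).tsum_eq fun x : ι → ℤ => f (u + intVec x)]
      simp only [Equiv.coe_addLeft, intVec_add, add_assoc]
  have hcoeff : mFourierCoeff F = fun n => 𝓕 f (intVec n) := funext fun n =>
    mFourierCoeff_eq_fourier_intVec
      (integrable_of_norm_le_one_add_norm_rpow_neg hf hr hdecay) hF n
  have h := hasSum_mFourier_series_apply_of_summable (f := F) (hcoeff ▸ hsum)
    (fun i => ((0 : EuclideanSpace ℝ ι) i : UnitAddCircle))
  simpa only [mFourier_coe, inner_zero_left, AddChar.map_zero_eq_one, Circle.coe_one, smul_eq_mul,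
    mul_one, hF, zero_add, hcoeff] using h.tsum_eq.symm

end Poisson

section Gaussian

open MeasureTheory FourierTransform Matrix
open scoped RealInnerProductSpace

lemma fourier_comp_linearEquiv {V E : Type*} [NormedAddCommGroup V] [InnerProductSpace ℝ V]
    [FiniteDimensional ℝ V] [MeasurableSpace V] [BorelSpace V] [NormedAddCommGroup E]
    [NormedSpace ℂ E] (T : V ≃ₗ[ℝ] V) (f : V → E) (w : V) :
    𝓕 (f ∘ T) w =
      |LinearMap.det (T : V →ₗ[ℝ] V)|⁻¹ • 𝓕 f (LinearMap.adjoint (T.symm : V →ₗ[ℝ] V) w) := by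
  have hmap : Measure.map T volume = _ :=
    Measure.map_linearMap_addHaar_eq_smul_addHaar volume T.isUnit_det'.ne_zero
  have hadj (v : V) : ⟪T v, LinearMap.adjoint (T.symm : V →ₗ[ℝ] V) w⟫ = ⟪v, w⟫ := by
    simp [LinearMap.adjoint_inner_right]
  let g (v : V) := 𝐞 (-⟪v, LinearMap.adjoint (T.symm : V →ₗ[ℝ] V) w⟫) • f v
  calc 𝓕 (f ∘ T) w = ∫ v, g (T v) := by
        simp only [Real.fourier_eq, g, hadj, Function.comp_apply]
    _ = ∫ v, g v ∂(Measure.map T volume) :=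
        (T.toContinuousLinearEquiv.toHomeomorph.measurableEmbedding.integral_map g).symm
    _ = _ := by
        rw [hmap, integral_smul_measure, ENNReal.toReal_ofReal (abs_nonneg _), abs_inv,
          Real.fourier_eq]

lemma exp_neg_mul_sq_le_mul_one_add_rpow_neg {c r t : ℝ} (hc : 0 < c) (hr : 0 ≤ r) (ht : 0 ≤ t) :
    Real.exp (-(c * t ^ 2)) ≤ Real.exp (r ^ 2 / (4 * c)) * (1 + t) ^ (-r) := by
  have hpow : (1 + t) ^ r ≤ Real.exp (r * t) := by
    rw [mul_comm, Real.exp_mul]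
    exact Real.rpow_le_rpow (by positivity) (by linarith [Real.add_one_le_exp t]) hr
  have hsq : r * t - c * t ^ 2 ≤ r ^ 2 / (4 * c) := by
    rw [le_div_iff₀ (by positivity)]
    nlinarith [sq_nonneg (r - 2 * c * t)]
  rw [Real.rpow_neg (by positivity), ← div_eq_mul_inv, le_div_iff₀ (by positivity)]
  calc Real.exp (-(c * t ^ 2)) * (1 + t) ^ r
      ≤ Real.exp (-(c * t ^ 2)) * Real.exp (r * t) := by gcongr
    _ = Real.exp (r * t - c * t ^ 2) := by rw [← Real.exp_add, neg_add_eq_sub]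
    _ ≤ Real.exp (r ^ 2 / (4 * c)) := Real.exp_le_exp.mpr hsq

variable {ι : Type*} [Fintype ι]

/-- The Gaussian `v ↦ e^{πiτ vᵀAv}` on `ℝ^ι`, whose sum over `ℤ^ι` is the theta series of `A`. -/
def quadraticGaussian (A : Matrix ι ι ℝ) (τ : ℂ) (v : EuclideanSpace ℝ ι) : ℂ :=
  cexp (π * I * τ * ((v.ofLp ⬝ᵥ A *ᵥ v.ofLp : ℝ) : ℂ))

lemma continuous_quadraticGaussian (A : Matrix ι ι ℝ) (τ : ℂ) :
    Continuous (quadraticGaussian A τ) := by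
  unfold quadraticGaussian
  fun_prop

lemma norm_quadraticGaussian (A : Matrix ι ι ℝ) (τ : ℂ) (v : EuclideanSpace ℝ ι) :
    ‖quadraticGaussian A τ v‖ = Real.exp (-(π * τ.im * (v.ofLp ⬝ᵥ A *ᵥ v.ofLp))) := by
  rw [quadraticGaussian, Complex.norm_exp]
  simp [mul_assoc]

open scoped MatrixOrder ComplexOrder in
lemma exists_eq_transpose_mul_self_of_posDef [DecidableEq ι] {A : Matrix ι ι ℝ} (hA : A.PosDef) :
    ∃ B : Matrix ι ι ℝ, A = Bᵀ * B ∧ IsUnit B.det := by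
  obtain ⟨B, hB⟩ := CStarAlgebra.nonneg_iff_eq_star_mul_self.mp hA.posSemidef.nonneg
  rw [star_eq_conjTranspose, conjTranspose_eq_transpose_of_trivial] at hB
  exact ⟨B, hB, (isUnit_iff_isUnit_det B).mp (isUnit_of_mul_isUnit_right (hB ▸ hA.isUnit))⟩

lemma norm_toEuclideanLin_sq [DecidableEq ι] {κ : Type*} [Fintype κ] (B : Matrix κ ι ℝ)
    (v : EuclideanSpace ℝ ι) : ‖toEuclideanLin B v‖ ^ 2 = v.ofLp ⬝ᵥ (Bᵀ * B) *ᵥ v.ofLp := by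
  rw [EuclideanSpace.real_norm_sq_eq, ← mulVec_mulVec, dotProduct_mulVec, vecMul_transpose,
    dotProduct]
  simp [sq]

lemma exists_linearEquiv_of_posDef [DecidableEq ι] {A : Matrix ι ι ℝ} (hA : A.PosDef) :
    ∃ T : EuclideanSpace ℝ ι ≃ₗ[ℝ] EuclideanSpace ℝ ι,
      |LinearMap.det (T : EuclideanSpace ℝ ι →ₗ[ℝ] EuclideanSpace ℝ ι)| = √A.det ∧
      (∀ v, ‖T v‖ ^ 2 = v.ofLp ⬝ᵥ A *ᵥ v.ofLp) ∧
      ∀ w, ‖LinearMap.adjoint (T.symm : EuclideanSpace ℝ ι →ₗ[ℝ] EuclideanSpace ℝ ι) w‖ ^ 2 =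
        w.ofLp ⬝ᵥ A⁻¹ *ᵥ w.ofLp := by
  obtain ⟨B, rfl, hB⟩ := exists_eq_transpose_mul_self_of_posDef hA
  let T : EuclideanSpace ℝ ι ≃ₗ[ℝ] EuclideanSpace ℝ ι :=
    LinearEquiv.ofLinearMap (toEuclideanLin B) (toEuclideanLin B⁻¹)
      (by rw [← toLpLin_mul_same, mul_nonsing_inv _ hB, toLpLin_one])
      (by rw [← toLpLin_mul_same, nonsing_inv_mul _ hB, toLpLin_one])
  refine ⟨T, ?_, norm_toEuclideanLin_sq B, fun w => ?_⟩
  · rw [det_mul, det_transpose, ← sq, Real.sqrt_sq_eq_abs]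
    exact congrArg abs (LinearMap.det_toLpLin 2 B)
  · have hadj : LinearMap.adjoint (T.symm : EuclideanSpace ℝ ι →ₗ[ℝ] EuclideanSpace ℝ ι) =
        toEuclideanLin (B⁻¹)ᵀ := by
      rw [← conjTranspose_eq_transpose_of_trivial, toEuclideanLin_conjTranspose_eq_adjoint]
      rfl
    rw [hadj, norm_toEuclideanLin_sq, transpose_transpose, Matrix.mul_inv_rev,
      transpose_nonsing_inv]

variable {A : Matrix ι ι ℝ} {τ : ℂ}

lemma exists_mul_norm_sq_le_of_posDef (hA : A.PosDef) :
    ∃ c : ℝ, 0 < c ∧ ∀ v : EuclideanSpace ℝ ι, c * ‖v‖ ^ 2 ≤ v.ofLp ⬝ᵥ A *ᵥ v.ofLp := by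
  classical
  obtain ⟨T, -, hT, -⟩ := exists_linearEquiv_of_posDef hA
  obtain ⟨K, hK, hanti⟩ :=
    (T : EuclideanSpace ℝ ι →ₗ[ℝ] EuclideanSpace ℝ ι).exists_antilipschitzWith T.ker
  refine ⟨(K ^ 2 : ℝ)⁻¹, by positivity, fun v => ?_⟩
  have hle : ‖v‖ ≤ K * ‖T v‖ := by simpa using hanti.le_mul_dist v 0
  rw [← hT, inv_mul_le_iff₀ (by positivity), ← mul_pow]
  gcongr

lemma exists_norm_quadraticGaussian_le (hA : A.PosDef) (hτ : 0 < τ.im) {r : ℝ} (hr : 0 ≤ r) :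
    ∃ C : ℝ, ∀ v, ‖quadraticGaussian A τ v‖ ≤ C * (1 + ‖v‖) ^ (-r) := by
  obtain ⟨c, hc, hcA⟩ := exists_mul_norm_sq_le_of_posDef hA
  refine ⟨Real.exp (r ^ 2 / (4 * (π * τ.im * c))), fun v => ?_⟩
  calc ‖quadraticGaussian A τ v‖ = Real.exp (-(π * τ.im * (v.ofLp ⬝ᵥ A *ᵥ v.ofLp))) :=
        norm_quadraticGaussian A τ v
    _ ≤ Real.exp (-(π * τ.im * c * ‖v‖ ^ 2)) := by
        rw [mul_assoc _ c]
        gcongr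
        exact hcA v
    _ ≤ _ := exp_neg_mul_sq_le_mul_one_add_rpow_neg (by positivity) hr (norm_nonneg v)

lemma summable_quadraticGaussian_intVec (hA : A.PosDef) (hτ : 0 < τ.im) :
    Summable fun x : ι → ℤ => quadraticGaussian A τ (intVec x) := by
  obtain ⟨C, hC⟩ := exists_norm_quadraticGaussian_le hA hτ (r := Fintype.card ι + 1) (by positivity)
  exact ((summable_one_add_norm_intVec_rpow_neg (lt_add_one _)).mul_left C).of_norm_bounded
    fun x => hC (intVec x)

theorem fourier_quadraticGaussian [DecidableEq ι] (hA : A.PosDef) (hτ : 0 < τ.im)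
    (w : EuclideanSpace ℝ ι) :
    𝓕 (quadraticGaussian A τ) w =
      (√A.det)⁻¹ • ((I / τ) ^ (Fintype.card ι / 2 : ℂ) * quadraticGaussian A⁻¹ (-1 / τ) w) := by
  obtain ⟨T, hdet, hT, hTsymm⟩ := exists_linearEquiv_of_posDef hA
  have hτ0 : τ ≠ 0 := UpperHalfPlane.ne_zero ⟨τ, hτ⟩
  have hre : 0 < (-(π * I * τ)).re := by
    rw [show (-(π * I * τ)).re = π * τ.im by simp]
    positivity
  have hcomp : quadraticGaussian A τ =
      (fun v : EuclideanSpace ℝ ι => cexp (-(-(π * I * τ)) * ‖v‖ ^ 2)) ∘ T := by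
    ext v
    simp [quadraticGaussian, ← hT]
  have hπ : (π : ℂ) / (-(π * I * τ)) = I / τ := by
    field_simp
    simp
  rw [hcomp, fourier_comp_linearEquiv, hdet, fourier_gaussian_innerProductSpace hre, hπ,
    finrank_euclideanSpace, quadraticGaussian, ← hTsymm]
  congr 3
  push_cast
  field_simp
  rw [Complex.I_sq]
  ring

lemma im_neg_one_div_pos (hτ : 0 < τ.im) : 0 < (-1 / τ).im := by
  rw [neg_div, one_div, ← inv_neg]
  exact UpperHalfPlane.im_inv_neg_coe_pos ⟨τ, hτ⟩

end Gaussian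

section Theta

open Filter FourierTransform Matrix Topology

variable {ι : Type*} [Fintype ι]

/-- The theta series `∑_{x ∈ ℤ^ι} e^{πiτ xᵀAx}` of a real matrix `A`; the inversion formula pairs it
with the theta series of `A⁻¹`, which need not be integral when `A` is. -/
def quadraticTheta (A : Matrix ι ι ℝ) (τ : ℂ) : ℂ := ∑' x : ι → ℤ, quadraticGaussian A τ (intVec x)

variable {A : Matrix ι ι ℝ} {τ : ℂ}

theorem quadraticTheta_eq_smul_quadraticTheta_inv [DecidableEq ι] (hA : A.PosDef)
    (hτ : 0 < τ.im) :
    quadraticTheta A τ =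
      (√A.det)⁻¹ • ((I / τ) ^ (Fintype.card ι / 2 : ℂ) * quadraticTheta A⁻¹ (-1 / τ)) := by
  obtain ⟨C, hC⟩ := exists_norm_quadraticGaussian_le hA hτ (r := Fintype.card ι + 1) (by positivity)
  have hsum := ((summable_quadraticGaussian_intVec hA.inv (im_neg_one_div_pos hτ)).mul_left
    ((I / τ) ^ (Fintype.card ι / 2 : ℂ))).const_smul (√A.det)⁻¹
  calc quadraticTheta A τ = ∑' n : ι → ℤ, 𝓕 (quadraticGaussian A τ) (intVec n) :=
        tsum_intVec_eq_tsum_fourier_intVec (continuous_quadraticGaussian A τ) (lt_add_one _) hC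
          (by simpa only [fourier_quadraticGaussian hA hτ] using hsum)
    _ = _ := by
        simp only [fourier_quadraticGaussian hA hτ, tsum_const_smul'', tsum_mul_left,
          quadraticTheta]

lemma norm_quadraticGaussian_le_of_im_le (hA : A.PosSemidef) {τ₁ τ₂ : ℂ} (h : τ₁.im ≤ τ₂.im)
    (v : EuclideanSpace ℝ ι) : ‖quadraticGaussian A τ₂ v‖ ≤ ‖quadraticGaussian A τ₁ v‖ := by
  have hnonneg : 0 ≤ v.ofLp ⬝ᵥ A *ᵥ v.ofLp := by simpa using hA.dotProduct_mulVec_nonneg v.ofLp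
  rw [norm_quadraticGaussian, norm_quadraticGaussian]
  gcongr

lemma differentiableOn_quadraticTheta (hA : A.PosDef) :
    DifferentiableOn ℂ (quadraticTheta A) {τ | 0 < τ.im} := by
  intro τ₀ (hτ₀ : 0 < τ₀.im)
  let τ₁ : ℂ := (τ₀.im / 2 : ℝ) * I
  have hτ₁ : τ₁.im = τ₀.im / 2 := by simp [τ₁]
  have hopen : IsOpen {τ : ℂ | τ₁.im < τ.im} := isOpen_lt continuous_const Complex.continuous_im
  have hdiff : DifferentiableOn ℂ (quadraticTheta A) {τ : ℂ | τ₁.im < τ.im} :=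
    Complex.differentiableOn_tsum_of_summable_norm
      (summable_quadraticGaussian_intVec hA (τ := τ₁) (by linarith)).norm
      (fun x => by unfold quadraticGaussian; fun_prop) hopen
      fun x τ hτ => norm_quadraticGaussian_le_of_im_le hA.posSemidef (le_of_lt hτ) _
  exact (hdiff.differentiableAt (hopen.mem_nhds (by
    change τ₁.im < τ₀.im
    linarith))).differentiableWithinAt

lemma tendsto_quadraticGaussian_atImInfty (hA : A.PosDef) {v : EuclideanSpace ℝ ι} (hv : v ≠ 0) :
    Tendsto (fun τ : UpperHalfPlane => quadraticGaussian A τ v) UpperHalfPlane.atImInfty (𝓝 0) := by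
  have hpos : 0 < v.ofLp ⬝ᵥ A *ᵥ v.ofLp := by
    simpa using hA.dotProduct_mulVec_pos (x := v.ofLp) (by simpa using hv)
  rw [tendsto_zero_iff_norm_tendsto_zero]
  simp only [norm_quadraticGaussian]
  exact Real.tendsto_exp_neg_atTop_nhds_zero.comp
    ((tendsto_comap.const_mul_atTop pi_pos).atTop_mul_const hpos)

lemma tendsto_quadraticTheta_atImInfty (hA : A.PosDef) :
    Tendsto (fun τ : UpperHalfPlane => quadraticTheta A τ) UpperHalfPlane.atImInfty (𝓝 1) := by
  classical
  have hone : (1 : ℂ) = ∑' x : ι → ℤ, if x = 0 then 1 else 0 := by simp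
  rw [hone]
  refine tendsto_tsum_of_dominated_convergence
    (summable_quadraticGaussian_intVec hA (τ := I) (by simp)).norm (fun x => ?_) ?_
  · split_ifs with hx
    · simp [hx, quadraticGaussian, intVec_zero]
    · exact tendsto_quadraticGaussian_atImInfty hA (intVec_zero (ι := ι) ▸ intVec_injective.ne hx)
  · have him : ∀ᶠ τ : UpperHalfPlane in UpperHalfPlane.atImInfty, 1 ≤ τ.im :=
      tendsto_comap.eventually (eventually_ge_atTop 1)
    filter_upwards [him] with τ hτ x
    exact norm_quadraticGaussian_le_of_im_le hA.posSemidef (by simpa using hτ) _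

section Integral

variable {S : Matrix ι ι ℤ}

lemma intVec_mulVec_ofLp (S : Matrix ι ι ℤ) (x : ι → ℤ) :
    (intVec (S *ᵥ x)).ofLp = S.map ((↑) : ℤ → ℝ) *ᵥ (intVec x).ofLp := by
  ext i
  simp [intVec, mulVec, dotProduct]

lemma quadraticGaussian_inv_intVec_mulVec [DecidableEq ι]
    (hS : (S.map ((↑) : ℤ → ℝ)).PosDef) (τ : ℂ) (x : ι → ℤ) :
    quadraticGaussian (S.map (↑))⁻¹ τ (intVec (S *ᵥ x)) =
      quadraticGaussian (S.map (↑)) τ (intVec x) := by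
  rw [quadraticGaussian, quadraticGaussian, intVec_mulVec_ofLp, mulVec_mulVec,
    nonsing_inv_mul _ ((isUnit_iff_isUnit_det _).mp hS.isUnit), one_mulVec, dotProduct_comm]

lemma quadraticTheta_inv_of_det_eq_one [DecidableEq ι] (hS : (S.map ((↑) : ℤ → ℝ)).PosDef)
    (hdet : S.det = 1) (τ : ℂ) :
    quadraticTheta (S.map (↑))⁻¹ τ = quadraticTheta (S.map (↑)) τ := by
  rw [quadraticTheta, quadraticTheta,
    ← (SpecialLinearGroup.toLin' ⟨S, hdet⟩).toEquiv.tsum_eq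
      fun n => quadraticGaussian _ τ (intVec n)]
  exact tsum_congr fun x => quadraticGaussian_inv_intVec_mulVec hS τ x

lemma even_dotProduct_mulVec (hS : S.IsSymm) (heven : ∀ i, Even (S i i)) (x : ι → ℤ) :
    Even (x ⬝ᵥ S *ᵥ x) := by
  rw [even_iff_two_dvd, ← Nat.cast_ofNat, ← ZMod.intCast_zmod_eq_zero_iff_dvd]
  simp only [dotProduct, mulVec, Finset.mul_sum]
  rw [← Finset.sum_product', Int.cast_sum]
  -- The off-diagonal terms at `(i, j)` and `(j, i)` cancel modulo two.
  refine Finset.sum_involution (fun p _ => (p.2, p.1)) (fun p _ => ?_) (fun p _ hp hpp => hp ?_)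
    (fun _ _ => by simp) (fun _ _ => rfl)
  · rw [hS.apply p.1 p.2, ← Int.cast_add, ZMod.intCast_zmod_eq_zero_iff_dvd]
    exact ⟨x p.1 * (S p.1 p.2 * x p.2), by push_cast; ring⟩
  · obtain ⟨i, j⟩ := p
    obtain rfl : j = i := congrArg Prod.fst hpp
    rw [ZMod.intCast_zmod_eq_zero_iff_dvd]
    exact ((heven j).two_dvd.mul_right _).mul_left _

end Integral

section ThetaSeries

variable {m : ℕ} {S : Matrix (Fin m) (Fin m) ℤ}

lemma thetaSeries_eq_quadraticTheta (S : Matrix (Fin m) (Fin m) ℤ) :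
    thetaSeries S = quadraticTheta (S.map (↑)) := by
  ext τ
  refine tsum_congr fun x => ?_
  simp [quadraticGaussian, intVec, dotProduct, mulVec]

theorem thetaSeries_inversion (hS : (S.map ((↑) : ℤ → ℝ)).PosDef) (hdet : S.det = 1)
    (hτ : 0 < τ.im) : thetaSeries S τ = (I / τ) ^ (m / 2 : ℂ) * thetaSeries S (-1 / τ) := by
  have hdet' : (S.map ((↑) : ℤ → ℝ)).det = 1 := by
    simpa [hdet] using ((Int.castRingHom ℝ).map_det S).symm
  rw [thetaSeries_eq_quadraticTheta, quadraticTheta_eq_smul_quadraticTheta_inv hS hτ, hdet',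
    quadraticTheta_inv_of_det_eq_one hS hdet]
  simp

lemma thetaSeries_add_one (hS : S.IsSymm) (heven : ∀ i, Even (S i i)) (τ : ℂ) :
    thetaSeries S (τ + 1) = thetaSeries S τ := by
  refine tsum_congr fun x => ?_
  obtain ⟨k, hk⟩ := even_dotProduct_mulVec hS heven x
  rw [Complex.exp_eq_exp_iff_exists_int, hk]
  exact ⟨k, by push_cast; ring⟩

end ThetaSeries

end Theta

section Eisenstein

open EisensteinSeries UpperHalfPlane

lemma mul_inv_mem_GammaInf_iff {x y : SL(2, ℤ)} :
    y * x⁻¹ ∈ GammaInf ↔ y 1 0 * x 1 1 = y 1 1 * x 1 0 := by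
  have hentry : (y * x⁻¹) 1 0 = y 1 0 * x 1 1 - y 1 1 * x 1 0 := by
    rw [Matrix.SpecialLinearGroup.coe_mul, (Matrix.two_mul_expl y.1 (x⁻¹).1).2.2.1,
      Matrix.SpecialLinearGroup.SL2_inv_expl x]
    simp [sub_eq_add_neg]
  change (y * x⁻¹) 1 0 = 0 ↔ _
  rw [hentry, sub_eq_zero]

lemma exists_units_smul_of_mul_inv_mem_GammaInf {x y : SL(2, ℤ)} (h : y * x⁻¹ ∈ GammaInf) :
    ∃ ε : ℤˣ, ∀ j, y 1 j = ε * x 1 j := by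
  set η := y * x⁻¹ with hη
  have hη0 : η 1 0 = 0 := h
  have hdet : η 1 1 * η 0 0 = 1 := by
    have hdetη := η.det_coe
    rw [Matrix.det_fin_two, hη0] at hdetη
    linarith
  refine ⟨Units.mkOfMulEqOne _ _ hdet, fun j => ?_⟩
  have hy : y = η * x := by simp [hη]
  rw [hy, Matrix.SpecialLinearGroup.coe_mul, Matrix.mul_apply, Fin.sum_univ_two, hη0]
  simp

/-- The bottom row of the chosen representative of a coset in `Γ∞\SL₂(ℤ)`, up to a sign: this
matches the cosets, doubled by the sign, with the coprime pairs `(c, d)` that index Mathlib's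
Eisenstein series. -/
def signedBottomRow (p : Quotient (QuotientGroup.rightRel GammaInf) × ℤˣ) : gammaSet 1 1 0 :=
  ⟨fun j => p.2 * p.1.out 1 j, by
    rw [mem_gammaSet_one]
    exact (isCoprime_mul_unit_left p.2.isUnit _ _).mpr (ModularGroup.bottom_row_coprime p.1.out)⟩

lemma signedBottomRow_injective : Function.Injective signedBottomRow := by
  rintro ⟨q, ε⟩ ⟨q', ε'⟩ h
  have hrow (j : Fin 2) : (ε : ℤ) * q.out 1 j = ε' * q'.out 1 j :=
    congrFun (congrArg Subtype.val h) j
  obtain rfl : q = q' := by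
    rw [← Quotient.out_equiv_out]
    refine QuotientGroup.rightRel_apply.mpr (mul_inv_mem_GammaInf_iff.mpr ?_)
    refine mul_left_cancel₀ (mul_ne_zero ε.ne_zero ε'.ne_zero) ?_
    linear_combination ε * q.out 1 1 * -hrow 0 + ε * q.out 1 0 * hrow 1
  obtain ⟨j, hj⟩ : ∃ j, q.out 1 j ≠ 0 := by
    by_contra! hzero
    have hcoprime := ModularGroup.bottom_row_coprime q.out
    rw [hzero 0, hzero 1] at hcoprime
    exact not_isCoprime_zero_zero hcoprime
  exact Prod.ext rfl (Units.ext (mul_right_cancel₀ hj (hrow j)))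

lemma signedBottomRow_surjective : Function.Surjective signedBottomRow := by
  rintro ⟨v, hv⟩
  obtain ⟨g, hg0, hg1⟩ := ((mem_gammaSet_one v).mp hv).exists_SL2_row 1
  obtain ⟨ε, hε⟩ := exists_units_smul_of_mul_inv_mem_GammaInf
    (QuotientGroup.rightRel_apply.mp (Quotient.mk_out (s := QuotientGroup.rightRel GammaInf) g))
  refine ⟨(⟦g⟧, ε), Subtype.ext (funext fun j => (hε j).symm.trans ?_)⟩
  fin_cases j
  exacts [hg0, hg1]

lemma jsq_eq_out (τ : ℂ) (q : Quotient (QuotientGroup.rightRel GammaInf)) :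
    jsq τ q = ((q.out 1 0 : ℤ) * τ + (q.out 1 1 : ℤ)) ^ 2 := by
  conv_lhs => rw [← q.out_eq]
  rfl

lemma eisSummand_signedBottomRow {w : ℕ} (hw : Even w)
    (p : Quotient (QuotientGroup.rightRel GammaInf) × ℤˣ) (z : ℍ) :
    eisSummand w (signedBottomRow p) z = jsq z p.1 ^ (-((w : ℤ) / 2)) := by
  obtain ⟨k, rfl⟩ := hw
  obtain ⟨q, ε⟩ := p
  have hε : ((ε : ℤ) : ℂ) ^ 2 = 1 := by
    rw [← Int.cast_pow, ← Units.val_pow_eq_pow_val, Int.units_sq, Units.val_one, Int.cast_one]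
  have hk : -((k + k : ℕ) : ℤ) = 2 * -(k : ℤ) := by push_cast; ring
  have hk' : -(((k + k : ℕ) : ℤ) / 2) = -(k : ℤ) := by lia
  rw [hk', jsq_eq_out, eisSummand, hk, zpow_mul]
  congr 1
  simp only [signedBottomRow, Int.cast_mul, zpow_ofNat]
  linear_combination ((q.out 1 0 : ℤ) * (z : ℂ) + (q.out 1 1 : ℤ)) ^ 2 * hε

theorem Ewt_eq_E {w : ℕ} (hw : 3 ≤ w) (heven : Even w) (z : ℍ) :
    Ewt w z = ModularForm.E hw z := by
  let e := Equiv.ofBijective _ ⟨signedBottomRow_injective, signedBottomRow_surjective⟩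
  have hsummand (p) : eisSummand w (e p) z = jsq z p.1 ^ (-((w : ℤ) / 2)) :=
    eisSummand_signedBottomRow heven p z
  have hsum : Summable fun p => eisSummand w (e p) z :=
    e.summable_iff.mpr ((summable_eisSummand hw z).subtype (gammaSet 1 1 0))
  symm
  calc ModularForm.E hw z = 1 / 2 * ∑' v : gammaSet 1 1 0, eisSummand w v z := rfl
    _ = 1 / 2 * ∑' p, eisSummand w (e p) z := by
      rw [← e.tsum_eq fun v : gammaSet 1 1 0 => eisSummand w v z]
    _ = ∑' q, 1 / 2 * ∑' ε, eisSummand w (e (q, ε)) z := by rw [hsum.tsum_prod, tsum_mul_left]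
    _ = Ewt w z := tsum_congr fun q => by simp [hsummand]

end Eisenstein

section ModularForm

open UpperHalfPlane Filter Topology ModularForm

theorem eq_E_of_qExpansion_coeff_zero_eq_one {k : ℕ} (hk : 3 ≤ k) (heven : Even k) (hk' : k < 12)
    (f : ModularForm 𝒮ℒ k) (hf : (qExpansion 1 f).coeff 0 = 1) : f = E hk := by
  rw [← sub_eq_zero]
  refine sturm_bound_levelOne_nat ?_
  have hcoeff : (qExpansion 1 (f - E hk)).coeff 0 = 0 := by
    rw [ModularForm.qExpansion_sub one_pos one_mem_strictPeriods_SL, map_sub, hf,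
      EisensteinSeries.E_qExpansion_coeff_zero _ heven, sub_self]
  have horder : (1 : ℕ∞) ≤ (qExpansion 1 (f - E hk)).order :=
    PowerSeries.nat_le_order _ 1 fun i hi => by rwa [Nat.lt_one_iff.mp hi]
  rw [Nat.div_eq_of_lt hk']
  exact lt_of_lt_of_le (by norm_num) horder

variable {m : ℕ} {S : Matrix (Fin m) (Fin m) ℤ}

lemma thetaSeries_slash (hS : IsPosDefEvenUnimodular S) (hm : 8 ∣ m) (γ : SL(2, ℤ)) :
    (fun τ : ℍ => thetaSeries S τ) ∣[((m / 2 : ℕ) : ℤ)] γ = fun τ : ℍ => thetaSeries S τ := by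
  obtain ⟨hsymm, hpos, hdet, heven⟩ := hS
  have hexp : (m / 2 : ℂ) = (m / 2 : ℕ) := by
    rw [Nat.cast_div (by lia) two_ne_zero, Nat.cast_ofNat]
  have hI : Complex.I ^ (m / 2) = 1 := by
    obtain ⟨k, rfl⟩ := hm
    rw [show 8 * k / 2 = 4 * k by lia, pow_mul, Complex.I_pow_four, one_pow]
  refine SlashInvariantForm.slash_action_generators_SL2Z ?_ ?_ γ
  · ext z
    rw [SlashInvariantForm.slash_S_apply, thetaSeries_inversion hpos hdet z.im_pos, hexp,
      Complex.cpow_natCast, div_pow, hI, mul_comm, zpow_neg, zpow_natCast, one_div, neg_div,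
      one_div, ← inv_neg]
  · ext z
    rw [SL_slash_apply, modular_T_smul, ModularGroup.denom_apply]
    simp [ModularGroup.T, add_comm (1 : ℂ), thetaSeries_add_one hsymm heven]

lemma tendsto_thetaSeries_atImInfty (hS : IsPosDefEvenUnimodular S) :
    Tendsto (fun τ : ℍ => thetaSeries S τ) atImInfty (𝓝 1) :=
  thetaSeries_eq_quadraticTheta S ▸ tendsto_quadraticTheta_atImInfty hS.2.1

/-- The theta series of an even unimodular lattice of rank `m`, as a modular form of level one and
weight `m / 2`. -/
def thetaModularForm (hS : IsPosDefEvenUnimodular S) (hm : 8 ∣ m) :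
    ModularForm 𝒮ℒ (m / 2 : ℕ) where
  toFun τ := thetaSeries S τ
  slash_action_eq' := fun _ ⟨γ, hγ⟩ => hγ ▸ thetaSeries_slash hS hm γ
  holo' := by
    rw [UpperHalfPlane.mdifferentiable_iff]
    refine (differentiableOn_quadraticTheta hS.2.1).congr fun z hz => ?_
    simp [ofComplex_apply_of_im_pos hz, thetaSeries_eq_quadraticTheta]
  bdd_at_cusps' {c} hc := by
    rw [Subgroup.IsArithmetic.isCusp_iff_isCusp_SL2Z] at hc
    rw [OnePoint.isBoundedAt_iff_forall_SL2Z hc]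
    intro γ _
    exact (thetaSeries_slash hS hm γ).symm ▸ (tendsto_thetaSeries_atImInfty hS).isBigO_one ℝ

lemma thetaModularForm_qExpansion_coeff_zero (hS : IsPosDefEvenUnimodular S) (hm : 8 ∣ m) :
    (qExpansion 1 (thetaModularForm hS hm)).coeff 0 = 1 := by
  rw [UpperHalfPlane.qExpansion_coeff_zero one_pos
    (ModularFormClass.analyticAt_cuspFunction_zero _ one_pos one_mem_strictPeriods_SL)
    (SlashInvariantFormClass.periodic_comp_ofComplex _ one_mem_strictPeriods_SL)]
  exact (tendsto_thetaSeries_atImInfty hS).limUnder_eq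

end ModularForm

theorem thetaSeries_sixteen_eq_E8_general {m : ℕ} (hm₀ : 0 < m) (hm : m < 24) (h8 : 8 ∣ m)
    (S : Matrix (Fin m) (Fin m) ℤ) (hS : IsPosDefEvenUnimodular S) :
    ∀ τ ∈ UHP, thetaSeries S τ = Ewt (m / 2) τ := by
  intro τ hτ
  have hk : 3 ≤ m / 2 := by lia
  have heven : Even (m / 2) := even_iff_two_dvd.mpr (by lia)
  have hform : thetaModularForm hS h8 = ModularForm.E hk :=
    eq_E_of_qExpansion_coeff_zero_eq_one hk heven (by lia) _
      (thetaModularForm_qExpansion_coeff_zero hS h8)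
  calc thetaSeries S τ = ModularForm.E hk ⟨τ, hτ⟩ :=
        DFunLike.congr_fun hform (⟨τ, hτ⟩ : UpperHalfPlane)
    _ = Ewt (m / 2) τ := (Ewt_eq_E hk heven ⟨τ, hτ⟩).symm

/-- For every positive definite even unimodular `16 × 16` matrix `S`, the theta series
`θ_S` equals the weight-8 Eisenstein series `E₈` on the upper half-plane. -/
theorem thetaSeries_sixteen_eq_E8 (S : Matrix (Fin 16) (Fin 16) ℤ)
    (hS : IsPosDefEvenUnimodular S) :
    ∀ τ ∈ UHP, thetaSeries S τ = E8 τ :=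
  thetaSeries_sixteen_eq_E8_general (by norm_num) (by norm_num) (by norm_num) S hS

end
end
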